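/- arXiv:1303.3385 — 3 statements merged into one kernel-verified Lean document; each statement's English description precedes it below -/
import Mathlib

section
/- Let q be an odd prime power. The rank over F_2 of the point–hyperplane incidence matrix of PG(n,q) equals q^n + q^{n-1} + ... + q + 1 if n is odd, and q^n + q^{n-1} + ... + q if n is even. -/
open Classical in
/-- Indicator of a proposition in `F₂`. -/
noncomputable def ind (p : Prop) : ZMod 2 := if p then 1 else 0

/-!
Write `[k] = 1 + q + ⋯ + q ^ (k - 1)`, the number of points of a `k`-dimensional subspace and, by
duality, the number of hyperplanes through a subspace of codimension `k`. The incidence matrix `A`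
of points and hyperplanes thus satisfies `1ᵀ A = [n] 1ᵀ`, and `A Aᵀ` has entries `[n]` on and
`[n - 1]` off the diagonal, so that `q A Aᵀ = q ^ n I + ([n] - 1) J`. Over a field in which `q` is
nonzero, the second identity forces every vector of the left kernel of `A` to be a multiple of the
all-one vector, and by the first one the all-one vector lies in that kernel exactly when `[n] = 0`.
Modulo 2 with `q` odd, `[n]` is `n`.
-/

open Finset Matrix Module LinearAlgebra.Projectivization

section LinearAlgebra

variable {K m n : Type*} [Field K] [Fintype m] [Fintype n] [DecidableEq m]
  {A : Matrix m n K} {B : Matrix n m K} {a r : K} {u v : m → K} {w : n → K}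

theorem ker_vecMulLinear_le_span_singleton (ha : a ≠ 0)
    (hAB : A * B = a • 1 + vecMulVec u v) :
    LinearMap.ker A.vecMulLinear ≤ Submodule.span K {v} := by
  intro x hx
  have hxA : x ᵥ* A = 0 := hx
  have hx_eq : a • x + (x ⬝ᵥ u) • v = 0 := by
    simpa [← vecMul_vecMul, hxA, vecMul_add, vecMul_smul, vecMul_vecMulVec] using
      (congrArg (x ᵥ* ·) hAB).symm
  have hax : a • x ∈ Submodule.span K {v} := by
    rw [eq_neg_of_add_eq_zero_left hx_eq]
    exact neg_mem (Submodule.smul_mem _ _ (Submodule.mem_span_singleton_self v))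
  exact (Submodule.smul_mem_iff _ ha).1 hax

theorem rank_add_ite_of_mul_eq_smul_one_add_vecMulVec [DecidableEq K] (ha : a ≠ 0) (hv : v ≠ 0)
    (hw : w ≠ 0) (hAB : A * B = a • 1 + vecMulVec u v) (hvA : v ᵥ* A = r • w) :
    A.rank + (if r = 0 then 1 else 0) = Fintype.card m := by
  have hker := ker_vecMulLinear_le_span_singleton ha hAB
  have hv_mem : v ∈ LinearMap.ker A.vecMulLinear ↔ r = 0 := by
    rw [LinearMap.mem_ker, vecMulLinear_apply, hvA, smul_eq_zero_iff_left hw]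
  have hfinrank : finrank K (LinearMap.ker A.vecMulLinear) = if r = 0 then 1 else 0 := by
    split_ifs with hr
    · rw [hker.antisymm ((Submodule.span_singleton_le_iff_mem _ _).2 (hv_mem.2 hr)),
        finrank_span_singleton hv]
    · have hne : LinearMap.ker A.vecMulLinear ≠ Submodule.span K {v} := fun h =>
        hr (hv_mem.1 (h ▸ Submodule.mem_span_singleton_self v))
      rw [((nonzero_span_atom v hv).le_iff.1 hker).resolve_right hne, finrank_bot]
  rw [← hfinrank, ← A.rank_transpose, Matrix.rank, mulVecLin_transpose,
    LinearMap.finrank_range_add_finrank_ker, finrank_fintype_fun_eq_card]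

end LinearAlgebra

theorem finrank_sup_submodule_of_ne {F V : Type*} [DivisionRing F] [AddCommGroup V] [Module F V]
    {P Q : ℙ F V} (h : P ≠ Q) : finrank F ↥(P.submodule ⊔ Q.submodule) = 2 := by
  have hP := P.finrank_submodule
  have hQ := Q.finrank_submodule
  have hdisj : Disjoint P.submodule Q.submodule :=
    (Submodule.isAtom_iff_finrank_eq_one.2 hP).disjoint_of_ne
      (Submodule.isAtom_iff_finrank_eq_one.2 hQ) (Projectivization.submodule_injective.ne h)
  have := FiniteDimensional.of_finrank_pos (hP ▸ one_pos)
  have := FiniteDimensional.of_finrank_pos (hQ ▸ one_pos)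
  have hsum := Submodule.finrank_sup_add_finrank_inf_eq P.submodule Q.submodule
  rwa [hdisj.eq_bot, finrank_bot, add_zero, hP, hQ] at hsum

section Counting

variable {F V : Type*} [Field F] [Finite F] [AddCommGroup V] [Module F V]

theorem card_finrank_eq_one_and_le (S : Submodule F V) :
    Nat.card {L : Submodule F V // finrank F L = 1 ∧ L ≤ S} =
      ∑ i ∈ range (finrank F S), Nat.card F ^ i := by
  rw [← Projectivization.card_of_finrank F S rfl]
  refine (Nat.card_congr ?_).symm
  calc ℙ F S ≃ {L : Submodule F S // finrank F L = 1} := Projectivization.equivSubmodule F S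
    _ ≃ {L : Set.Iic S // finrank F L.1 = 1} :=
      S.mapIic.toEquiv.subtypeEquiv fun L => by
        rw [← Submodule.finrank_map_subtype_eq S L]
        rfl
    _ ≃ {L : Submodule F V // L ≤ S ∧ finrank F L = 1} :=
      Equiv.subtypeSubtypeEquivSubtypeInter (· ≤ S) (fun L => finrank F L = 1)
    _ ≃ {L : Submodule F V // finrank F L = 1 ∧ L ≤ S} :=
      Equiv.subtypeEquivRight fun _ => and_comm

theorem card_projectivization_submodule_le (S : Submodule F V) :
    Nat.card {P : ℙ F V // P.submodule ≤ S} = ∑ i ∈ range (finrank F S), Nat.card F ^ i := by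
  rw [← card_finrank_eq_one_and_le S]
  refine Nat.card_congr ?_
  calc {P : ℙ F V // P.submodule ≤ S}
    _ ≃ {L : {L : Submodule F V // finrank F L = 1} // L.1 ≤ S} :=
      (Projectivization.equivSubmodule F V).subtypeEquiv fun _ => Iff.rfl
    _ ≃ {L : Submodule F V // finrank F L = 1 ∧ L ≤ S} :=
      Equiv.subtypeSubtypeEquivSubtypeInter (fun L : Submodule F V => finrank F L = 1) (· ≤ S)

variable {n : ℕ}

theorem card_hyperplane_ge (hV : finrank F V = n + 1) (U : Submodule F V) :
    Nat.card {W : {W : Submodule F V // finrank F W = n} // U ≤ W.1} =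
      ∑ i ∈ range (n + 1 - finrank F U), Nat.card F ^ i := by
  have : FiniteDimensional F V := FiniteDimensional.of_finrank_pos (by lia)
  have hU : n + 1 - finrank F U = finrank F U.dualAnnihilator := by
    have := Subspace.finrank_add_finrank_dualAnnihilator_eq U
    lia
  rw [hU, ← card_finrank_eq_one_and_le]
  refine Nat.card_congr ?_
  calc {W : {W : Submodule F V // finrank F W = n} // U ≤ W.1}
    _ ≃ {W : Submodule F V // finrank F W = n ∧ U ≤ W} :=
      Equiv.subtypeSubtypeEquivSubtypeInter _ (U ≤ ·)
    _ ≃ {L : Submodule F (Dual F V) // finrank F L = 1 ∧ L ≤ U.dualAnnihilator} :=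
      Subspace.orderIsoFiniteDimensional.toEquiv.subtypeEquiv fun W => by
        have hW := Subspace.finrank_add_finrank_dualAnnihilator_eq W
        refine and_congr ?_ Subspace.dualAnnihilator_le_dualAnnihilator_iff.symm
        change finrank F W = n ↔ finrank F W.dualAnnihilator = 1
        lia

theorem nonempty_hyperplane (hV : finrank F V = n + 1) :
    Nonempty {W : Submodule F V // finrank F W = n} := by
  have hpos : 0 < Nat.card {W : {W : Submodule F V // finrank F W = n} // ⊥ ≤ W.1} := by
    rw [card_hyperplane_ge hV]
    simp [sum_range_succ']
  exact (Nat.card_pos_iff.1 hpos).1.map Subtype.val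

end Counting

section Incidence

open Classical in
/-- The incidence matrix, with entries in `K`, of the points of the projective space of `V` and the
subspaces of `V` of vector space dimension `d`. It is the point-hyperplane incidence matrix of
`PG(n,q)` when `V` has dimension `n + 1` over the field with `q` elements and `d = n`. -/
noncomputable def incidenceMatrix (K F V : Type*) [Zero K] [One K] [Field F] [AddCommGroup V]
    [Module F V] (d : ℕ) : Matrix (ℙ F V) {W : Submodule F V // finrank F W = d} K :=
  of fun P W => if P.submodule ≤ W.1 then 1 else 0

variable (K : Type*) {F V : Type*} [Field F] [Finite F] [AddCommGroup V] [Module F V]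

theorem one_vecMul_incidenceMatrix [Semiring K] [Fintype (ℙ F V)] (d : ℕ) :
    1 ᵥ* incidenceMatrix K F V d = (∑ i ∈ range d, (Nat.card F : K) ^ i) • 1 := by
  classical
  ext W
  have hcard := card_projectivization_submodule_le W.1
  rw [W.2, Nat.card_eq_fintype_card, Fintype.card_subtype] at hcard
  simp [vecMul, dotProduct, incidenceMatrix, hcard]

variable {n : ℕ} [Fintype {W : Submodule F V // finrank F W = n}]

theorem incidenceMatrix_mul_transpose_apply [Semiring K] (hV : finrank F V = n + 1) (P Q : ℙ F V) :
    (incidenceMatrix K F V n * (incidenceMatrix K F V n)ᵀ) P Q =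
      ∑ i ∈ range (n + 1 - finrank F ↥(P.submodule ⊔ Q.submodule)), (Nat.card F : K) ^ i := by
  classical
  have hcard := card_hyperplane_ge hV (P.submodule ⊔ Q.submodule)
  rw [Nat.card_eq_fintype_card, Fintype.card_subtype] at hcard
  simp only [sup_le_iff] at hcard
  simp [mul_apply, incidenceMatrix, ← ite_and, and_comm, hcard]

-- The factor `q` avoids the exponent `n - 1`, so that the identity also holds for `n = 0`.
theorem incidenceMatrix_mul_smul_transpose [CommRing K] [DecidableEq (ℙ F V)]
    (hV : finrank F V = n + 1) :
    incidenceMatrix K F V n * ((Nat.card F : K) • (incidenceMatrix K F V n)ᵀ) =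
      (Nat.card F : K) ^ n • 1 +
        vecMulVec (fun _ => ∑ i ∈ range n, (Nat.card F : K) ^ i - 1) 1 := by
  ext P Q
  rw [Matrix.mul_smul, Matrix.smul_apply, incidenceMatrix_mul_transpose_apply K hV]
  simp only [smul_eq_mul, Matrix.add_apply, Matrix.smul_apply, vecMulVec_apply, one_apply,
    Pi.one_apply, mul_one]
  split_ifs with hPQ
  · subst hPQ
    have hgeom := (geom_sum_succ (x := (Nat.card F : K)) (n := n)).symm.trans geom_sum_succ'
    rw [sup_idem, P.finrank_submodule, Nat.add_sub_cancel]
    linear_combination hgeom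
  · have hline := finrank_sup_submodule_of_ne hPQ
    have : FiniteDimensional F V := FiniteDimensional.of_finrank_pos (by lia)
    have hn : 2 ≤ n + 1 := hline ▸ hV ▸ Submodule.finrank_le _
    obtain ⟨m, rfl⟩ : ∃ m, n = m + 1 := ⟨n - 1, by lia⟩
    rw [hline, geom_sum_succ (n := m)]
    simp

end Incidence

theorem stmt1_general (K F V : Type*) [Field K] [DecidableEq K] [Field F] [Finite F]
    [AddCommGroup V] [Module F V] (n : ℕ) (hV : finrank F V = n + 1) (hF : (Nat.card F : K) ≠ 0)
    [Fintype {W : Submodule F V // finrank F W = n}] :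
    (incidenceMatrix K F V n).rank =
      if ∑ i ∈ range n, (Nat.card F : K) ^ i = 0 then ∑ i ∈ Icc 1 n, Nat.card F ^ i
      else ∑ i ∈ range (n + 1), Nat.card F ^ i := by
  classical
  have := nonempty_hyperplane (F := F) hV
  have : FiniteDimensional F V := FiniteDimensional.of_finrank_pos (by lia)
  have : Finite V := Module.finite_of_finite F
  have : Nontrivial V := nontrivial_of_finrank_pos (R := F) (by lia)
  let _ : Fintype (ℙ F V) := Fintype.ofFinite _
  have hrank := rank_add_ite_of_mul_eq_smul_one_add_vecMulVec (pow_ne_zero n hF) one_ne_zero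
    one_ne_zero (incidenceMatrix_mul_smul_transpose K hV) (one_vecMul_incidenceMatrix K n)
  rw [← Nat.card_eq_fintype_card, Projectivization.card_of_finrank F V hV] at hrank
  have hsplit : ∑ i ∈ range (n + 1), Nat.card F ^ i = ∑ i ∈ Icc 1 n, Nat.card F ^ i + 1 := by
    rw [sum_range_succ', pow_zero, range_eq_Ico, sum_Ico_add' (Nat.card F ^ ·) 0 n 1]
    rfl
  split_ifs at hrank ⊢ <;> lia

theorem geom_sum_zmod_two_eq_zero_iff_even {q : ℕ} (hq : Odd q) (n : ℕ) :
    ∑ i ∈ range n, (q : ZMod 2) ^ i = 0 ↔ Even n := by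
  simp [ZMod.natCast_eq_one_iff_odd.2 hq, ZMod.natCast_eq_zero_iff_even]

/-- The 2-rank of the point–hyperplane incidence matrix of `PG(n,q)` is
`q^n + ⋯ + q + 1` if `n` is odd and `q^n + ⋯ + q` if `n` is even. -/
theorem stmt1 (F : Type) [Field F] [Fintype F] (q n : ℕ)
    (hq : Fintype.card F = q) (hodd : Odd q)
    [Fintype {W : Submodule F (Fin (n + 1) → F) // Module.finrank F ↥W = n}] :
    (Matrix.of fun (P : Projectivization F (Fin (n + 1) → F))
        (W : {W : Submodule F (Fin (n + 1) → F) // Module.finrank F ↥W = n}) =>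
        ind (P.submodule ≤ W.1)).rank =
      if Odd n then ∑ i ∈ Finset.range (n + 1), q ^ i
      else ∑ i ∈ Finset.Icc 1 n, q ^ i := by
  obtain rfl : Nat.card F = q := Nat.card_eq_fintype_card.trans hq
  have hF : (Nat.card F : ZMod 2) ≠ 0 := ZMod.natCast_eq_one_iff_odd.2 hodd ▸ one_ne_zero
  refine (stmt1_general (ZMod 2) F _ n (finrank_fin_fun F) hF).trans ?_
  simp only [geom_sum_zmod_two_eq_zero_iff_even hodd, ← Nat.not_even_iff_odd, ite_not]
end

section
/- Let q be an odd prime power. Let A_11 be the 0-1 matrix over F_2 whose rows are indexed by the anisotropic points P of PG(2,q) (with respect to Q(x) = x_1^2 − x_0 x_2) and whose columns are indexed by the anisotropic points R, with entry 1 exactly when R lies on the polar line P^⊥ of P. Then A_11^4 = J − I over F_2, where J is the all-ones matrix and I is the identity. -/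
/-- The quadratic form `Q(x₀,x₁,x₂) = x₁² - x₀x₂` on `F³`. -/
def Qc (F : Type) [Field F] (v : Fin 3 → F) : F := v 1 ^ 2 - v 0 * v 2

/-- The bilinear form associated to `Qc`. -/
def Bc (F : Type) [Field F] (x y : Fin 3 → F) : F :=
  (2 : F)⁻¹ * (Qc F (x + y) - Qc F x - Qc F y)

/-- A point of `PG(2,q)` is absolute if `Q` vanishes on it. -/
def Absolute (F : Type) [Field F] (P : Projectivization F (Fin 3 → F)) : Prop :=
  Qc F P.rep = 0

/-- A point of `PG(2,q)` is external if `Q` takes a nonzero square value on it. -/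
def External (F : Type) [Field F] (P : Projectivization F (Fin 3 → F)) : Prop :=
  IsSquare (Qc F P.rep) ∧ Qc F P.rep ≠ 0

/-- A point of `PG(2,q)` is internal if `Q` takes a non-square value on it. -/
def Internal (F : Type) [Field F] (P : Projectivization F (Fin 3 → F)) : Prop :=
  ¬ IsSquare (Qc F P.rep)

/-- Lines of `PG(2,q)` are the 2-dimensional subspaces of `F³`. -/
def IsLine (F : Type) [Field F] (L : Submodule F (Fin 3 → F)) : Prop :=
  Module.finrank F ↥L = 2

/-- The number of absolute points on a line. -/
noncomputable def nAbs (F : Type) [Field F] (L : Submodule F (Fin 3 → F)) : ℕ :=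
  Nat.card {P : Projectivization F (Fin 3 → F) // Absolute F P ∧ P.submodule ≤ L}

/-- The incidence matrix between anisotropic points and the polar lines of
anisotropic points: the `(P,R)` entry is `1` iff `⟨P,R⟩ = 0`. -/
noncomputable def A11 (F : Type) [Field F] :
    Matrix {P : Projectivization F (Fin 3 → F) // Qc F P.rep ≠ 0}
      {P : Projectivization F (Fin 3 → F) // Qc F P.rep ≠ 0} (ZMod 2) :=
  Matrix.of fun P R => ind (Bc F P.1.rep R.1.rep = 0)

/-!
Let `A` be the incidence matrix over `F₂` of a polarity of a projective plane of odd order: `A` is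
symmetric, `A𝟙 = 0` because lines have an even number of points, and `A² = J - 1` because two
distinct lines share exactly one point. When the non-absolute points are listed before the absolute
ones, `A` becomes a block matrix `[B, C; Cᵀ, 1]`, since no absolute point lies on the polar of
another one.

The diagonal of `A` is the indicator vector `d` of the absolute points. As `vᵀAv = ∑ Aᵢᵢvᵢ²` for
symmetric `A` in characteristic two, the diagonal of `A³` is `A d`, whereas `A³ = A(J - 1) = -A`.
Hence `A d = d`, so the polar of a non-absolute point carries an even number of absolute points:
`C𝟙 = 0`, and then also `B𝟙 = 0`. Now `B² = J - 1 - CCᵀ` and `BC = J - C` give `B²C = C - J`,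
whence `B⁴ = B²(J - 1 - CCᵀ) = -B² - CCᵀ = 1 - J`.
-/

open scoped LinearAlgebra.Projectivization
open Matrix Configuration

section BlockMatrix

lemma pow_four_of_block_equations {R α β : Type*} [Ring R] [Fintype α] [Fintype β] [DecidableEq α]
    {B : Matrix α α R} {C : Matrix α β R} {D : Matrix β α R}
    (hBB : B * B + C * D = vecMulVec 1 1 - 1) (hBC : B * C + C = vecMulVec 1 1)
    (hB : B *ᵥ 1 = 0) (hD : 1 ᵥ* D = 0) : B ^ 4 = 1 - vecMulVec 1 1 := by
  have hB2 : B * B = vecMulVec 1 1 - 1 - C * D := eq_sub_of_add_eq hBB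
  have hB2C : B * B * C = C - vecMulVec 1 1 := by
    rw [Matrix.mul_assoc, eq_sub_of_add_eq hBC, Matrix.mul_sub, mul_vecMulVec, hB,
      zero_vecMulVec, zero_sub, eq_sub_of_add_eq hBC, neg_sub]
  have hB2J : B * B * vecMulVec 1 1 = (0 : Matrix α α R) := by
    rw [Matrix.mul_assoc, mul_vecMulVec, hB, zero_vecMulVec, Matrix.mul_zero]
  have hB2CD : B * B * (C * D) = C * D := by
    rw [← Matrix.mul_assoc, hB2C, Matrix.sub_mul, vecMulVec_mul, hD, vecMulVec_zero, sub_zero]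
  calc B ^ 4 = B * B * (B * B) := by rw [← pow_two, ← pow_two, ← pow_mul]
    _ = B * B * (vecMulVec 1 1 - 1 - C * D) := by rw [← hB2]
    _ = -(B * B) - C * D := by
        rw [Matrix.mul_sub, Matrix.mul_sub, hB2J, hB2CD, Matrix.mul_one, zero_sub]
    _ = 1 - vecMulVec 1 1 := by rw [hB2]; abel

lemma toBlock_mulVec_add_toBlock_mulVec {R m n : Type*} [NonUnitalNonAssocSemiring R] [Fintype n]
    (A : Matrix m n R) (p : m → Prop) (q : n → Prop) [DecidablePred q]
    (v : n → R) (i : {i // p i}) :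
    (A.toBlock p q *ᵥ fun j => v j) i + (A.toBlock p (fun j => ¬q j) *ᵥ fun j => v j) i =
      (A *ᵥ v) i :=
  Fintype.sum_subtype_add_sum_subtype q fun j => A i j * v j

variable {V : Type*} [Fintype V]

lemma dotProduct_mulVec_self_of_isSymm {R : Type*} [CommRing R] [CharP R 2] {A : Matrix V V R}
    (hA : A.IsSymm) (v : V → R) : v ⬝ᵥ A *ᵥ v = ∑ i, A i i * v i ^ 2 := by
  classical
  let f (x : V × V) : R := v x.1 * (A x.1 x.2 * v x.2)
  have hdiag : ∑ x with x.1 = x.2, f x = ∑ i, A i i * v i ^ 2 := by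
    simp only [Finset.sum_filter, Fintype.sum_prod_type, Finset.sum_ite_eq, Finset.mem_univ,
      if_true, f]
    exact Finset.sum_congr rfl fun i _ => by ring
  have hoff : ∑ x with x.1 ≠ x.2, f x = 0 := by
    refine Finset.sum_involution (fun x _ => x.swap) ?_ ?_ ?_ ?_
    · rintro ⟨i, j⟩ -
      have hswap : f (j, i) = f (i, j) := by
        simp only [f, hA.apply i j]
        ring
      rw [Prod.swap_prod_mk, hswap, CharTwo.add_self_eq_zero]
    · rintro ⟨i, j⟩ hij - hswap
      simp_all
    · simp [eq_comm]
    · simp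
  calc v ⬝ᵥ A *ᵥ v = ∑ x, f x := by
        simp only [dotProduct, mulVec, Finset.mul_sum, Fintype.sum_prod_type, f]
    _ = ∑ i, A i i * v i ^ 2 := by
        rw [← Finset.sum_filter_add_sum_filter_not _ fun x : V × V => x.1 = x.2, hdiag, hoff,
          add_zero]

variable [DecidableEq V] {A : Matrix V V (ZMod 2)}

lemma mulVec_diag_eq_diag (hA : A.IsSymm) (hAA : A * A = vecMulVec 1 1 - 1) (hA1 : A *ᵥ 1 = 0) :
    A *ᵥ A.diag = A.diag := by
  have hAAA : A * (A * A) = -A := by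
    rw [hAA, Matrix.mul_sub, mul_vecMulVec, hA1, zero_vecMulVec, Matrix.mul_one, zero_sub]
  ext i
  calc (A *ᵥ A.diag) i = ∑ j, A j j * A i j ^ 2 := by
        simp only [mulVec, dotProduct, diag_apply, ZMod.pow_card, mul_comm]
    _ = A i ⬝ᵥ A *ᵥ A i := (dotProduct_mulVec_self_of_isSymm hA (A i)).symm
    _ = (A * (A * A)) i i := by
        simp only [mulVec, dotProduct, mul_apply, hA.apply i]
    _ = A.diag i := by rw [hAAA, Matrix.neg_apply, CharTwo.neg_eq, diag_apply]

variable {p : V → Prop} [DecidablePred p]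

lemma toBlock_not_mulVec_one (hA : A.IsSymm) (hAA : A * A = vecMulVec 1 1 - 1) (hA1 : A *ᵥ 1 = 0)
    (hp : ∀ i, p i ↔ A i i = 0) : A.toBlock p (fun i => ¬p i) *ᵥ 1 = 0 := by
  ext i
  have hzero : (fun j : {j // p j} => A.diag j) = 0 := funext fun j => (hp j).1 j.2
  have hone : (fun j : {j // ¬p j} => A.diag j) = 1 :=
    funext fun j => Fin.eq_one_of_ne_zero _ (mt (hp j).2 j.2)
  have hsplit := toBlock_mulVec_add_toBlock_mulVec A p p A.diag i
  rwa [hzero, hone, mulVec_zero, Pi.zero_apply, zero_add, mulVec_diag_eq_diag hA hAA hA1,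
    diag_apply, (hp i).1 i.2] at hsplit

lemma toBlock_mulVec_one (hA : A.IsSymm) (hAA : A * A = vecMulVec 1 1 - 1) (hA1 : A *ᵥ 1 = 0)
    (hp : ∀ i, p i ↔ A i i = 0) : A.toBlock p p *ᵥ 1 = 0 := by
  ext i
  have hsplit := toBlock_mulVec_add_toBlock_mulVec A p p 1 i
  rw [hA1] at hsplit
  have hC := congrFun (toBlock_not_mulVec_one hA hAA hA1 hp) i
  exact (eq_sub_of_add_eq hsplit).trans (sub_eq_zero.2 hC.symm)

lemma toBlock_pow_four (hA : A.IsSymm) (hAA : A * A = vecMulVec 1 1 - 1) (hA1 : A *ᵥ 1 = 0)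
    (hp : ∀ i, p i ↔ A i i = 0) (hnp : A.toBlock (fun i => ¬p i) (fun i => ¬p i) = 1) :
    A.toBlock p p ^ 4 = 1 - vecMulVec 1 1 := by
  have hD : 1 ᵥ* A.toBlock (fun i => ¬p i) p = 0 := by
    rw [← toBlock_not_mulVec_one hA hAA hA1 hp, ← vecMul_transpose]
    exact congrArg (1 ᵥ* ·) (ext fun i j => hA.apply j.1 i.1)
  have hsub (q : V → Prop) : (vecMulVec 1 1 - 1 : Matrix V V (ZMod 2)).toBlock p q =
      vecMulVec 1 1 - (1 : Matrix V V (ZMod 2)).toBlock p q := rfl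
  have hone : (1 : Matrix V V (ZMod 2)).toBlock p (fun i => ¬p i) = 0 :=
    toBlock_one_disjoint (Set.disjoint_left.2 fun _ hi hni => hni hi)
  have hBB := toBlock_mul_eq_add p p p A A
  rw [hAA, hsub, toBlock_one_self] at hBB
  have hBC := toBlock_mul_eq_add p p (fun i => ¬p i) A A
  rw [hAA, hsub, hone, sub_zero, hnp, Matrix.mul_one] at hBC
  exact pow_four_of_block_equations hBB.symm hBC.symm (toBlock_mulVec_one hA hAA hA1 hp) hD

end BlockMatrix

/-- A polarity of an incidence structure: a bijection `π` from points to lines such that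
`p ∈ π q` if and only if `q ∈ π p`. The line `π p` is the polar of `p`, and `p` is absolute if
it lies on its own polar. -/
structure Polarity (P L : Type*) [Membership P L] extends P ≃ L where
  mem_comm (p q : P) : p ∈ toFun q ↔ q ∈ toFun p

lemma ind_eq_zero_iff {p : Prop} : ind p = 0 ↔ ¬p := by
  simp [ind]

lemma sum_ind {α : Type*} [Fintype α] (p : α → Prop) :
    ∑ x, ind (p x) = (Nat.card {x // p x} : ZMod 2) := by
  classical
  simp only [ind, Finset.sum_boole, Nat.card_eq_fintype_card, Fintype.card_subtype]

lemma ind_mul_ind (p q : Prop) : ind p * ind q = ind (p ∧ q) := by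
  by_cases hp : p <;> by_cases hq : q <;> simp [ind, hp, hq]

lemma sum_ind_mem {P L : Type*} [Membership P L] [ProjectivePlane P L] [Fintype P] [Finite L]
    (hodd : Odd (ProjectivePlane.order P L)) (l : L) : ∑ p : P, ind (p ∈ l) = 0 := by
  rw [sum_ind, ZMod.natCast_eq_zero_iff_even]
  change Even (pointCount P l)
  rw [ProjectivePlane.pointCount_eq]
  exact hodd.add_one

lemma sum_ind_mem_and_mem {P L : Type*} [Membership P L] [HasPoints P L] [Fintype P]
    {l m : L} (h : l ≠ m) : ∑ p : P, ind (p ∈ l ∧ p ∈ m) = 1 := by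
  obtain ⟨_⟩ := (unique_subtype_iff_existsUnique _).2 (HasPoints.existsUnique_point P L l m h)
  rw [sum_ind, Nat.card_unique, Nat.cast_one]

namespace Polarity

variable {P L : Type*} [Membership P L] (π : Polarity P L)

/-- The incidence matrix over `F₂` of a polarity: rows are indexed by points, columns by the
points standing for their polars. -/
noncomputable def incMatrix : Matrix P P (ZMod 2) :=
  Matrix.of fun p q => ind (p ∈ π.toEquiv q)

lemma isSymm_incMatrix : π.incMatrix.IsSymm :=
  Matrix.IsSymm.ext fun p q => congrArg ind (propext (π.mem_comm q p))

lemma eq_of_absolute_of_mem [Nondegenerate P L] {p q : P} (hp : p ∈ π.toEquiv p)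
    (hq : q ∈ π.toEquiv q) (hpq : p ∈ π.toEquiv q) : p = q :=
  (Nondegenerate.eq_or_eq hp ((π.mem_comm p q).1 hpq) hpq hq).elim id (π.injective ·)

lemma incMatrix_toBlock_absolute [DecidableEq P] [Nondegenerate P L] {s : P → Prop}
    (hs : ∀ p, s p → p ∈ π.toEquiv p) : π.incMatrix.toBlock s s = 1 := by
  ext p q
  have hiff : p.1 ∈ π.toEquiv q.1 ↔ p = q :=
    ⟨fun h => Subtype.ext (π.eq_of_absolute_of_mem (hs p p.2) (hs q q.2) h), fun h => h ▸ hs p p.2⟩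
  simp only [incMatrix, toBlock_apply, of_apply, ind, hiff, one_apply]

variable [ProjectivePlane P L] [Fintype P]

lemma incMatrix_mulVec_one (hodd : Odd (ProjectivePlane.order P L)) : π.incMatrix *ᵥ 1 = 0 := by
  have : Finite L := Finite.of_equiv P π.toEquiv
  ext p
  calc (π.incMatrix *ᵥ 1) p = ∑ q, ind (q ∈ π.toEquiv p) := by
        simp only [mulVec, dotProduct_one, ← π.isSymm_incMatrix.apply p]
        rfl
    _ = 0 := sum_ind_mem hodd (π.toEquiv p)

lemma incMatrix_mul_self [DecidableEq P] (hodd : Odd (ProjectivePlane.order P L)) :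
    π.incMatrix * π.incMatrix = vecMulVec 1 1 - 1 := by
  have : Finite L := Finite.of_equiv P π.toEquiv
  ext p q
  have hentry : (π.incMatrix * π.incMatrix) p q =
      ∑ t, ind (t ∈ π.toEquiv p ∧ t ∈ π.toEquiv q) := by
    simp only [mul_apply, ← ind_mul_ind, ← π.isSymm_incMatrix.apply p]
    rfl
  rw [hentry, Matrix.sub_apply, vecMulVec_apply, Pi.one_apply, Pi.one_apply, mul_one]
  by_cases h : p = q
  · subst h
    simp only [and_self, sum_ind_mem hodd, one_apply_eq, sub_self]
  · rw [sum_ind_mem_and_mem (π.injective.ne h), one_apply_ne h, sub_zero]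

end Polarity

theorem stmt9_general {P L : Type*} [Membership P L] [ProjectivePlane P L] [Finite P]
    (π : Polarity P L) (hodd : Odd (ProjectivePlane.order P L))
    {s : P → Prop} (hs : ∀ p, s p ↔ p ∉ π.toEquiv p) [Fintype {p // s p}]
    [DecidableEq {p // s p}] :
    π.incMatrix.toBlock s s ^ 4 = (Matrix.of fun _ _ => (1 : ZMod 2)) - 1 := by
  classical
  have := Fintype.ofFinite P
  have hpow : π.incMatrix.toBlock s s ^ 4 = 1 - vecMulVec 1 1 := by
    convert toBlock_pow_four π.isSymm_incMatrix (π.incMatrix_mul_self hodd)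
      (π.incMatrix_mulVec_one hodd) (fun p => (hs p).trans ind_eq_zero_iff.symm)
      (π.incMatrix_toBlock_absolute fun p hp => not_not.1 (mt (hs p).2 hp))
  rw [hpow]
  ext p q
  simp only [Matrix.sub_apply, vecMulVec_apply, of_apply, Pi.one_apply, mul_one,
    CharTwo.sub_eq_add, add_comm]

section Conic

variable {K : Type*} [Field K]

/-- The polarity of `PG(2, K)` defined by a nondegenerate symmetric bilinear form with Gram matrix
`M`. Lines are identified with points of `PG(2, K)` through their coefficient vectors. -/
def Polarity.ofGram (M : GL (Fin 3) K) (hM : M.1.IsSymm) :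
    Polarity (ℙ K (Fin 3 → K)) (ℙ K (Fin 3 → K)) where
  toEquiv := MulAction.toPerm M
  mem_comm := by
    intro p q
    induction p with | h x hx
    induction q with | h y hy
    change x ⬝ᵥ M.1 *ᵥ y = 0 ↔ y ⬝ᵥ M.1 *ᵥ x = 0
    rw [dotProduct_mulVec, ← mulVec_transpose, hM.eq, dotProduct_comm]

lemma Polarity.mem_ofGram_iff {M : GL (Fin 3) K} (hM : M.1.IsSymm) (p q : ℙ K (Fin 3 → K)) :
    p ∈ (Polarity.ofGram M hM).toEquiv q ↔ p.rep ⬝ᵥ M.1 *ᵥ q.rep = 0 := by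
  conv_lhs => rw [← p.mk_rep, ← q.mk_rep]
  rfl

lemma order_projectivePlane_eq_card [Fintype K] [DecidableEq K] :
    ProjectivePlane.order (ℙ K (Fin 3 → K)) (ℙ K (Fin 3 → K)) = Fintype.card K := by
  have hcard : Fintype.card K ^ 2 + Fintype.card K + 1 =
      ProjectivePlane.order (ℙ K (Fin 3 → K)) (ℙ K (Fin 3 → K)) ^ 2 +
        ProjectivePlane.order (ℙ K (Fin 3 → K)) (ℙ K (Fin 3 → K)) + 1 := by
    have := Fintype.ofFinite (ℙ K (Fin 3 → K))
    rw [← ProjectivePlane.card_points, ← Nat.card_eq_fintype_card (α := ℙ K (Fin 3 → K)),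
      Projectivization.card_of_finrank K (Fin 3 → K) (Module.finrank_fin_fun K)]
    simp only [Finset.sum_range_succ, Finset.sum_range_zero, Nat.card_eq_fintype_card]
    ring
  nlinarith

lemma two_ne_zero_of_odd_card [Fintype K] (h : Odd (Fintype.card K)) : (2 : K) ≠ 0 :=
  Ring.two_ne_zero fun hchar =>
    Nat.not_even_iff_odd.2 h (Nat.even_iff.2 (FiniteField.even_card_of_char_two hchar))

variable (K) in
/-- The Gram matrix of the polar form of the conic `x₁² = x₀x₂`. -/
def conicGram : Matrix (Fin 3) (Fin 3) K :=
  !![0, 0, -2⁻¹; 0, 1, 0; -2⁻¹, 0, 0]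

lemma isSymm_conicGram : (conicGram K).IsSymm := by
  ext i j
  fin_cases i <;> fin_cases j <;> rfl

lemma det_conicGram_ne_zero (h2 : (2 : K) ≠ 0) : (conicGram K).det ≠ 0 := by
  simp [conicGram, det_fin_three, h2]

/-- The polarity of `PG(2, K)` whose absolute points are those of the conic `x₁² = x₀x₂`. -/
noncomputable def conicPolarity (h2 : (2 : K) ≠ 0) :
    Polarity (ℙ K (Fin 3 → K)) (ℙ K (Fin 3 → K)) :=
  Polarity.ofGram (GeneralLinearGroup.mkOfDetNeZero (conicGram K) (det_conicGram_ne_zero h2))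
    isSymm_conicGram

variable {F : Type} [Field F]

lemma Bc_eq_dotProduct_mulVec (h2 : (2 : F) ≠ 0) (x y : Fin 3 → F) :
    Bc F x y = x ⬝ᵥ conicGram F *ᵥ y := by
  simp only [Bc, Qc, conicGram, dotProduct, mulVec, Fin.sum_univ_three, Pi.add_apply, of_apply,
    cons_val', cons_val_zero, cons_val_one, cons_val]
  field_simp
  ring

lemma Bc_self (h2 : (2 : F) ≠ 0) (x : Fin 3 → F) : Bc F x x = Qc F x := by
  simp only [Bc, Qc, Pi.add_apply]
  field_simp
  ring

lemma mem_conicPolarity_iff (h2 : (2 : F) ≠ 0) (P R : ℙ F (Fin 3 → F)) :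
    P ∈ (conicPolarity h2).toEquiv R ↔ Bc F P.rep R.rep = 0 := by
  rw [Bc_eq_dotProduct_mulVec h2]
  exact Polarity.mem_ofGram_iff isSymm_conicGram P R

lemma Qc_rep_ne_zero_iff (h2 : (2 : F) ≠ 0) (P : ℙ F (Fin 3 → F)) :
    Qc F P.rep ≠ 0 ↔ P ∉ (conicPolarity h2).toEquiv P := by
  rw [mem_conicPolarity_iff, Bc_self h2]

lemma A11_eq_toBlock (h2 : (2 : F) ≠ 0) :
    A11 F = (conicPolarity h2).incMatrix.toBlock (Qc F ·.rep ≠ 0) (Qc F ·.rep ≠ 0) :=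
  Matrix.ext fun P R => congrArg ind (propext (mem_conicPolarity_iff h2 P.1 R.1).symm)

end Conic

/-- Over `F₂`, the fourth power of the anisotropic incidence matrix of `PG(2,q)`
is `J - I`, with `J` the all-ones matrix. -/
theorem stmt9 (F : Type) [Field F] [Fintype F] (q : ℕ)
    (hq : Fintype.card F = q) (hodd : Odd q)
    [Fintype {P : Projectivization F (Fin 3 → F) // Qc F P.rep ≠ 0}]
    [DecidableEq {P : Projectivization F (Fin 3 → F) // Qc F P.rep ≠ 0}] :
    A11 F ^ 4 = (Matrix.of fun _ _ => (1 : ZMod 2)) - 1 := by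
  classical
  have h2 := two_ne_zero_of_odd_card (hq ▸ hodd)
  exact A11_eq_toBlock h2 ▸ stmt9_general (conicPolarity h2)
    (by rwa [order_projectivePlane_eq_card, hq]) (Qc_rep_ne_zero_iff h2)
end

section
/- Let q be an odd prime power. In PG(2,q) with the conic O = {x_1^2 = x_0 x_2}, for any external point P, the complement of N_E(P) in E has cardinality 2(q−1)+1 = 2q−1; hence |N_E(P)| ≡ q(q+1)/2 − 1 (mod 2). -/
/-- `NE F P` is the set of external points, other than `P`, lying on some secant
(meeting the conic twice) or passant (missing the conic) line through `P`. -/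
def NE (F : Type) [Field F] (P : Projectivization F (Fin 3 → F)) :
    Set (Projectivization F (Fin 3 → F)) :=
  {R | External F R ∧ R ≠ P ∧
    ∃ L : Submodule F (Fin 3 → F), IsLine F L ∧ P.submodule ≤ L ∧ R.submodule ≤ L ∧
      (nAbs F L = 0 ∨ nAbs F L = 2)}

/-!
Let `Q` be the form of the conic and `P = ⟨p⟩` an external point. A line through `P` and `R` is a
tangent exactly when the discriminant `polar Q p r ^ 2 - 4 * Q p * Q r` vanishes, so the external
points outside `NE P` are the points of this tangent cone off the conic. Such a point has a unique
representative `r` with `polar Q p r = 2 * Q p`, and then `u = r - p` is an isotropic vector of the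
orthogonal complement of `p`; conversely every such `u` arises. Reflections act transitively on the
vectors of a given nonzero norm, so we may take `p = (0, s, 0)`, whose complement `x₁ = 0` is a
hyperbolic plane with `2q - 1` isotropic vectors.

An external point has exactly two representatives `±v` with `Q v = 1`, and counting the solutions
of `x₀ x₂ = x₁² - 1` for each `x₁` shows that there are `q(q + 1)` such vectors.
-/

open QuadraticMap (polar)
open scoped LinearAlgebra.Projectivization

section Quadratic

variable {K : Type*} [Field K] [NeZero (2 : K)] {a b c : K}

theorem ncard_quadratic_roots_le_two (ha : a ≠ 0) :
    {x : K | a * (x * x) + b * x + c = 0}.ncard ≤ 2 := by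
  by_cases h : IsSquare (discrim a b c)
  · obtain ⟨s, hs⟩ := h
    have hpair : {x : K | a * (x * x) + b * x + c = 0} =
        {(-b + s) / (2 * a), (-b - s) / (2 * a)} := Set.ext (quadratic_eq_zero_iff ha hs)
    rw [hpair]
    exact (Set.ncard_insert_le _ _).trans_eq (by rw [Set.ncard_singleton])
  · have hempty : {x : K | a * (x * x) + b * x + c = 0} = ∅ :=
      Set.eq_empty_of_forall_notMem
        (quadratic_ne_zero_of_discrim_ne_sq fun s hs ↦ h ⟨s, hs.trans (sq s)⟩)
    simp [hempty]

theorem ncard_quadratic_roots_eq_one_iff (ha : a ≠ 0) :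
    {x : K | a * (x * x) + b * x + c = 0}.ncard = 1 ↔ discrim a b c = 0 := by
  rw [discrim_eq_zero_iff ha, Set.ncard_eq_one, Set.singleton_iff_unique_mem]
  rfl

theorem ncard_quadratic_roots_eq_zero_or_two_iff (ha : a ≠ 0) :
    ({x : K | a * (x * x) + b * x + c = 0}.ncard = 0 ∨
      {x : K | a * (x * x) + b * x + c = 0}.ncard = 2) ↔ discrim a b c ≠ 0 := by
  rw [ne_eq, ← ncard_quadratic_roots_eq_one_iff ha]
  have := ncard_quadratic_roots_le_two (b := b) (c := c) ha
  omega

end Quadratic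

theorem card_mul_eq {K : Type*} [Field K] [Fintype K] [DecidableEq K] (c : K) :
    Nat.card {z : K × K // z.1 * z.2 = c} =
      (Fintype.card K - 1) + if c = 0 then Fintype.card K else 0 := by
  have hzero : Nat.card {y : K // 0 * y = c} = if c = 0 then Fintype.card K else 0 := by
    split_ifs with hc
    · simp [hc]
    · simp [Ne.symm hc]
  have hne (x : K) (hx : x ∈ ({0}ᶜ : Finset K)) : Nat.card {y : K // x * y = c} = 1 := by
    have hx0 : x ≠ 0 := by simpa using hx
    simp [← eq_inv_mul_iff_mul_eq₀ hx0]
  calc Nat.card {z : K × K // z.1 * z.2 = c}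
      = ∑ x : K, Nat.card {y : K // x * y = c} := by
        rw [Nat.card_congr (Equiv.subtypeProdEquivSigmaSubtype fun x y : K ↦ x * y = c),
          Nat.card_sigma]
    _ = (Fintype.card K - 1) + if c = 0 then Fintype.card K else 0 := by
        rw [Fintype.sum_eq_add_sum_compl 0, hzero, Finset.sum_congr rfl hne, Finset.sum_const,
          Finset.card_compl, Finset.card_singleton, smul_eq_mul, mul_one, add_comm]

section QuadraticForm

variable {K V : Type*} [Field K] [AddCommGroup V] [Module K V] (Q : QuadraticForm K V)

/-- The quadric of a quadratic form: the points of projective space at which the form vanishes. -/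
def quadric : Set (ℙ K V) := {R | Q R.rep = 0}

/-- The points of projective space at which a quadratic form takes nonzero square values; for the
form of a conic in a plane of odd order these are the external points. -/
def squarePoints : Set (ℙ K V) := {R | IsSquare (Q R.rep) ∧ Q R.rep ≠ 0}

/-- The tangent cone to the quadric of `Q` with apex the point spanned by `p`: the points at which
the discriminant of `Q` restricted to the line joining them to the apex vanishes. -/
def tangentCone (p : V) : Set (ℙ K V) := {R | discrim (Q p) (polar Q p R.rep) (Q R.rep) = 0}

/-- The isotropic vectors orthogonal to `p`. -/
def isotropicPerp (p : V) : Set V := {u | polar Q p u = 0 ∧ Q u = 0}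

variable {Q}

theorem mk_mem_quadric {v : V} (hv : v ≠ 0) : .mk K v hv ∈ quadric Q ↔ Q v = 0 := by
  obtain ⟨a, ha⟩ := Projectivization.exists_smul_eq_mk_rep K v hv
  simp [quadric, ← ha, Units.smul_def, Q.map_smul]

theorem mk_mem_squarePoints {v : V} (hv : v ≠ 0) :
    .mk K v hv ∈ squarePoints Q ↔ IsSquare (Q v) ∧ Q v ≠ 0 := by
  obtain ⟨a, ha⟩ := Projectivization.exists_smul_eq_mk_rep K v hv
  have hsq : IsSquare ((a : K) * a * Q v) ↔ IsSquare (Q v) :=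
    ⟨fun h ↦ by simpa using h.div (.mul_self (a : K)), (IsSquare.mul_self _).mul⟩
  simp [squarePoints, ← ha, Units.smul_def, Q.map_smul, hsq]

theorem mk_mem_tangentCone {p v : V} (hv : v ≠ 0) :
    .mk K v hv ∈ tangentCone Q p ↔ discrim (Q p) (polar Q p v) (Q v) = 0 := by
  obtain ⟨a, ha⟩ := Projectivization.exists_smul_eq_mk_rep K v hv
  have hscale : discrim (Q p) (a * polar Q p v) (a * a * Q v) =
      (a : K) ^ 2 * discrim (Q p) (polar Q p v) (Q v) := by
    simp only [discrim]
    ring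
  simp [tangentCone, ← ha, Units.smul_def, Q.map_smul, QuadraticMap.polar_smul_right, hscale]

theorem mem_tangentCone_rep (P : ℙ K V) : P ∈ tangentCone Q P.rep := by
  change discrim _ _ _ = 0
  rw [QuadraticMap.polar_self, discrim]
  ring

theorem squarePoints_inter_tangentCone [NeZero (2 : K)] {p : V} (hp : IsSquare (Q p))
    (hp0 : Q p ≠ 0) : squarePoints Q ∩ tangentCone Q p = tangentCone Q p \ quadric Q := by
  ext R
  refine ⟨fun ⟨hR, hRp⟩ ↦ ⟨hRp, hR.2⟩, fun ⟨hRp, hR0⟩ ↦ ⟨⟨?_, hR0⟩, hRp⟩⟩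
  have hRp : polar Q p R.rep ^ 2 - 4 * Q p * Q R.rep = 0 := hRp
  have h4 : (4 : K) = 2 * 2 := by norm_num
  have h4p : IsSquare (4 * Q p) := (h4 ▸ IsSquare.mul_self 2).mul hp
  have h4p0 : 4 * Q p ≠ 0 := mul_ne_zero (h4 ▸ mul_ne_zero two_ne_zero two_ne_zero) hp0
  rw [eq_div_of_mul_eq h4p0 ((mul_comm _ _).trans (sub_eq_zero.1 hRp).symm)]
  exact (IsSquare.sq _).div h4p

theorem exists_mk_smul_add_eq_of_submodule_le_span_pair {p r : V} {S : ℙ K V}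
    (hS : S.submodule ≤ .span K {p, r}) (hp : p ∉ S.submodule) :
    ∃ x : K, ∃ h : x • p + r ≠ 0, .mk K (x • p + r) h = S := by
  induction S using Projectivization.ind with | h v hv => ?_
  rw [Projectivization.submodule_mk] at hp
  rw [Projectivization.submodule_mk, Submodule.span_singleton_le_iff_mem,
    Submodule.mem_span_pair] at hS
  obtain ⟨a, b, rfl⟩ := hS
  have hb : b ≠ 0 := by
    rintro rfl
    rw [zero_smul, add_zero] at hp hv
    have ha : a ≠ 0 := fun h ↦ hv (by rw [h, zero_smul])
    exact hp (Submodule.mem_span_singleton.2 ⟨a⁻¹, inv_smul_smul₀ ha p⟩)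
  have hscale : b • ((a / b) • p + r) = a • p + b • r := by
    rw [smul_add, smul_smul, mul_div_cancel₀ _ hb]
  have hne : (a / b) • p + r ≠ 0 := fun h ↦ hv (by rw [← hscale, h, smul_zero])
  exact ⟨a / b, hne, ((Projectivization.mk_eq_mk_iff' K _ _ _ _).2 ⟨b, hscale⟩).symm⟩

theorem ncard_quadric_inter_span_pair {p r : V} (hpr : LinearIndependent K ![p, r])
    (hp : Q p ≠ 0) :
    {S ∈ quadric Q | S.submodule ≤ .span K {p, r}}.ncard =
      {x : K | Q p * (x * x) + polar Q p r * x + Q r = 0}.ncard := by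
  rw [LinearIndependent.pair_iff] at hpr
  have hne (x : K) : x • p + r ≠ 0 := fun h ↦
    one_ne_zero (hpr x 1 (by rwa [one_smul])).2
  have hQ (x : K) : Q (x • p + r) = Q p * (x * x) + polar Q p r * x + Q r := by
    rw [QuadraticMap.map_add Q, Q.map_smul, QuadraticMap.polar_smul_left, smul_eq_mul, smul_eq_mul]
    ring
  refine (Set.ncard_congr (fun x _ ↦ .mk K (x • p + r) (hne x)) ?_ ?_ ?_).symm
  · intro x hx
    refine ⟨(mk_mem_quadric _).2 ((hQ x).trans hx), ?_⟩
    rw [Projectivization.submodule_mk, Submodule.span_singleton_le_iff_mem,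
      Submodule.mem_span_pair]
    exact ⟨x, 1, by rw [one_smul]⟩
  · intro x y _ _ hxy
    obtain ⟨a, ha⟩ := (Projectivization.mk_eq_mk_iff' K _ _ _ _).1 hxy
    obtain ⟨hx, ha1⟩ := hpr (a * y - x) (a - 1) (by rw [← sub_eq_zero.2 ha]; module)
    rw [sub_eq_zero.1 ha1, one_mul] at hx
    exact (sub_eq_zero.1 hx).symm
  · rintro S ⟨hSQ, hSL⟩
    have hpS : p ∉ S.submodule := by
      rw [S.submodule_eq, Submodule.mem_span_singleton]
      rintro ⟨a, rfl⟩
      exact hp (by rw [Q.map_smul, hSQ, smul_zero])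
    obtain ⟨x, hx, rfl⟩ := exists_mk_smul_add_eq_of_submodule_le_span_pair hSL hpS
    exact ⟨x, (hQ x).symm.trans ((mk_mem_quadric hx).1 hSQ), rfl⟩

theorem map_add_of_mem_isotropicPerp {p u : V} (hu : u ∈ isotropicPerp Q p) :
    Q (p + u) = Q p := by
  rw [QuadraticMap.map_add Q, hu.1, hu.2, add_zero, add_zero]

theorem polar_add_of_mem_isotropicPerp {p u : V} (hu : u ∈ isotropicPerp Q p) :
    polar Q p (p + u) = 2 * Q p := by
  rw [QuadraticMap.polar_add_right, QuadraticMap.polar_self, hu.1, add_zero, two_nsmul, two_mul]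

theorem mk_add_mem_tangentCone_sdiff_quadric {p u : V} (hp : Q p ≠ 0)
    (hu : u ∈ isotropicPerp Q p) (hpu : p + u ≠ 0) :
    .mk K (p + u) hpu ∈ tangentCone Q p \ quadric Q := by
  have hQ : Q (p + u) = Q p := map_add_of_mem_isotropicPerp hu
  refine ⟨(mk_mem_tangentCone hpu).2 ?_, fun h ↦ hp (hQ ▸ (mk_mem_quadric hpu).1 h)⟩
  rw [hQ, polar_add_of_mem_isotropicPerp hu, discrim]
  ring

theorem exists_mk_add_eq_of_mem_tangentCone [NeZero (2 : K)] {p : V} (hp : Q p ≠ 0)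
    {R : ℙ K V} (hR : R ∈ tangentCone Q p \ quadric Q) :
    ∃ u ∈ isotropicPerp Q p, ∃ hpu : p + u ≠ 0, .mk K (p + u) hpu = R := by
  obtain ⟨v, hv, rfl⟩ : ∃ v, ∃ hv : v ≠ 0, .mk K v hv = R := ⟨_, _, R.mk_rep⟩
  rw [Set.mem_sdiff, mk_mem_tangentCone, mk_mem_quadric] at hR
  obtain ⟨hdisc : polar Q p v ^ 2 - 4 * Q p * Q v = 0, hQv⟩ := hR
  have h2 : (2 : K) ≠ 0 := two_ne_zero
  have ht : polar Q p v ≠ 0 := by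
    intro ht
    have h0 : 2 * 2 * Q p * Q v = 0 := by linear_combination polar Q p v * ht - hdisc
    simp [hp, hQv, h2] at h0
  set c := 2 * Q p / polar Q p v with hc
  have hpu : p + (c • v - p) = c • v := add_sub_cancel _ _
  have hpolar : polar Q p (c • v - p) = 0 := by
    rw [QuadraticMap.polar_sub_right, QuadraticMap.polar_smul_right, QuadraticMap.polar_self,
      smul_eq_mul, hc, div_mul_cancel₀ _ ht, two_nsmul, two_mul, sub_self]
  have hQu : Q (c • v - p) = 0 := by
    have hQpu := QuadraticMap.map_add Q p (c • v - p)
    rw [hpu, hpolar, Q.map_smul, smul_eq_mul, add_zero] at hQpu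
    have hQcv : c * c * Q v = Q p := by
      rw [hc]
      field_simp
      linear_combination -hdisc
    rwa [hQcv, left_eq_add] at hQpu
  have hc0 : c ≠ 0 := div_ne_zero (mul_ne_zero h2 hp) ht
  refine ⟨c • v - p, ⟨hpolar, hQu⟩, by rw [hpu]; exact smul_ne_zero hc0 hv, ?_⟩
  exact (Projectivization.mk_eq_mk_iff' K _ _ _ _).2 ⟨c, hpu.symm⟩

theorem ncard_tangentCone_sdiff_quadric [NeZero (2 : K)] {p : V} (hp : Q p ≠ 0) :
    (tangentCone Q p \ quadric Q).ncard = (isotropicPerp Q p).ncard := by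
  have hne {u : V} (hu : u ∈ isotropicPerp Q p) : p + u ≠ 0 :=
    ne_zero_of_map (f := Q) (by rwa [map_add_of_mem_isotropicPerp hu])
  refine (Set.ncard_congr (fun u hu ↦ .mk K (p + u) (hne hu))
    (fun u hu ↦ mk_add_mem_tangentCone_sdiff_quadric hp hu _) ?_ fun R hR ↦ ?_).symm
  · intro u v hu hv huv
    obtain ⟨a, ha⟩ := (Projectivization.mk_eq_mk_iff' K _ _ _ _).1 huv
    have ha1 : a * (2 * Q p) = 2 * Q p := by
      conv_rhs => rw [← polar_add_of_mem_isotropicPerp hu, ← ha, QuadraticMap.polar_smul_right,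
        polar_add_of_mem_isotropicPerp hv, smul_eq_mul]
    rw [(mul_eq_right₀ (mul_ne_zero two_ne_zero hp)).1 ha1, one_smul] at ha
    exact (add_left_cancel ha).symm
  · obtain ⟨u, hu, _, h⟩ := exists_mk_add_eq_of_mem_tangentCone hp hR
    exact ⟨u, hu, h⟩

variable (Q) in
/-- The reflection `x ↦ x - (polar Q v x / Q v) • v` in an anisotropic vector `v`, as an
isometry. -/
noncomputable def reflectionIsometry (v : V) (hv : Q v ≠ 0) : Q.IsometryEquiv Q where
  toLinearEquiv := Module.reflection (x := v) (f := (Q v)⁻¹ • Q.polarBilin v) (by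
    simp [QuadraticMap.polar_self, hv, mul_comm])
  map_app' x := by
    change Q (x - ((Q v)⁻¹ * polar Q v x) • v) = Q x
    rw [sub_eq_add_neg, ← neg_smul, QuadraticMap.map_add Q, QuadraticMap.polar_smul_right,
      Q.map_smul, QuadraticMap.polar_comm Q x]
    simp only [smul_eq_mul]
    field_simp
    ring

theorem reflectionIsometry_apply (v : V) (hv : Q v ≠ 0) (x : V) :
    reflectionIsometry Q v hv x = x - ((Q v)⁻¹ * polar Q v x) • v :=
  rfl

theorem reflectionIsometry_sub_apply {p r : V} (h : Q p = Q r) (hpr : Q (p - r) ≠ 0) :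
    reflectionIsometry Q (p - r) hpr p = r := by
  have hpolar : polar Q (p - r) p = Q (p - r) := by
    rw [sub_eq_add_neg, QuadraticMap.polar_add_left, QuadraticMap.polar_self,
      QuadraticMap.map_add Q, QuadraticMap.polar_neg_left, QuadraticMap.polar_neg_right, Q.map_neg,
      QuadraticMap.polar_comm Q r, ← h, two_nsmul]
  rw [reflectionIsometry_apply, hpolar, inv_mul_cancel₀ hpr, one_smul, sub_sub_cancel]

theorem exists_isometryEquiv_apply_eq [NeZero (2 : K)] {p r : V} (h : Q p = Q r) (hr : Q r ≠ 0) :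
    ∃ e : Q.IsometryEquiv Q, e p = r := by
  by_cases hsub : Q (p - r) = 0
  · have h22 : (2 * 2 : K) ≠ 0 := mul_ne_zero two_ne_zero two_ne_zero
    have hadd : Q (p - -r) ≠ 0 := by
      have hpar : Q (p - -r) + Q (p - r) = 2 * 2 * Q r := by
        rw [sub_neg_eq_add, sub_eq_add_neg p r, QuadraticMap.map_add Q, QuadraticMap.map_add Q,
          QuadraticMap.polar_neg_right, Q.map_neg, h]
        ring
      rw [hsub, add_zero] at hpar
      exact hpar ▸ mul_ne_zero h22 hr
    have hneg : Q (-r - r) ≠ 0 := by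
      rw [show -r - r = (-2 : K) • r by module, Q.map_smul, neg_mul_neg]
      exact mul_ne_zero h22 hr
    refine ⟨(reflectionIsometry Q _ hadd).trans (reflectionIsometry Q _ hneg), ?_⟩
    change reflectionIsometry Q _ hneg (reflectionIsometry Q _ hadd p) = r
    rw [reflectionIsometry_sub_apply (h.trans (Q.map_neg r).symm),
      reflectionIsometry_sub_apply (Q.map_neg r)]
  · exact ⟨_, reflectionIsometry_sub_apply h hsub⟩

theorem ncard_isotropicPerp_eq_of_apply_eq [NeZero (2 : K)] {p r : V} (h : Q p = Q r)
    (hr : Q r ≠ 0) : (isotropicPerp Q p).ncard = (isotropicPerp Q r).ncard := by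
  obtain ⟨e, rfl⟩ := exists_isometryEquiv_apply_eq h hr
  have hpolar (u : V) : polar Q (e p) (e u) = polar Q p u := by
    simp only [polar, ← map_add, e.map_app]
  refine Set.ncard_congr (fun u _ ↦ e u) (fun u hu ↦ ?_) (fun u v _ _ h ↦ ?_) fun w hw ↦ ?_
  · exact ⟨(hpolar u).trans hu.1, (e.map_app u).trans hu.2⟩
  · exact e.toLinearEquiv.injective h
  · obtain ⟨u, rfl⟩ := e.toLinearEquiv.surjective w
    exact ⟨u, ⟨(hpolar u).symm.trans hw.1, (e.map_app u).symm.trans hw.2⟩, rfl⟩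

theorem mk_eq_mk_iff_of_apply_eq {v w : V} (hv : v ≠ 0) (hw : w ≠ 0) (h : Q v = Q w)
    (h0 : Q w ≠ 0) :
    Projectivization.mk K v hv = Projectivization.mk K w hw ↔ v = w ∨ v = -w := by
  rw [Projectivization.mk_eq_mk_iff']
  constructor
  · rintro ⟨a, rfl⟩
    have ha : a * a = 1 := by simpa [Q.map_smul, h0] using h
    rcases mul_self_eq_one_iff.1 ha with rfl | rfl <;> simp
  · rintro (rfl | rfl)
    · exact ⟨1, one_smul K v⟩
    · exact ⟨-1, neg_one_smul K w⟩

variable (Q) in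
/-- The point of `squarePoints Q` spanned by a vector of norm `1`. -/
def pointOfNormOne (v : {v // Q v = 1}) : squarePoints Q :=
  have hv : (v : V) ≠ 0 := by
    intro h
    have := v.2
    simp [h] at this
  ⟨.mk K v hv, (mk_mem_squarePoints hv).2 (by simp [v.2])⟩

theorem pointOfNormOne_eq_iff {v w : {v // Q v = 1}} :
    pointOfNormOne Q v = pointOfNormOne Q w ↔ (v : V) = w ∨ (v : V) = -w := by
  rw [Subtype.ext_iff]
  exact mk_eq_mk_iff_of_apply_eq _ _ (v.2.trans w.2.symm) (by simp [w.2])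

theorem pointOfNormOne_surjective : Function.Surjective (pointOfNormOne Q) := by
  rintro ⟨R, ⟨s, hs⟩, hR⟩
  have hs0 : s ≠ 0 := by
    rintro rfl
    simp [hs] at hR
  have hQ : Q (s⁻¹ • R.rep) = 1 := by
    rw [Q.map_smul, hs, smul_eq_mul]
    field_simp
  refine ⟨⟨s⁻¹ • R.rep, hQ⟩, Subtype.ext (Eq.trans ?_ R.mk_rep)⟩
  exact (Projectivization.mk_eq_mk_iff' K _ _ _ _).2 ⟨s⁻¹, rfl⟩

theorem card_pointOfNormOne_fiber [NeZero (2 : K)] (R : squarePoints Q) :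
    Nat.card {v // pointOfNormOne Q v = R} = 2 := by
  obtain ⟨w, rfl⟩ := pointOfNormOne_surjective R
  let w' : {v // Q v = 1} := ⟨-w, (Q.map_neg _).trans w.2⟩
  have hw : w ≠ w' := by
    intro h
    have h2w : (2 : K) • (w : V) = 0 := by
      rw [two_smul]
      exact eq_neg_iff_add_eq_zero.1 (congrArg Subtype.val h)
    have hw0 : (w : V) = 0 := (smul_eq_zero.1 h2w).resolve_left two_ne_zero
    have := w.2
    simp [hw0] at this
  have hpair : {v | pointOfNormOne Q v = pointOfNormOne Q w} = {w, w'} := by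
    ext v
    rw [Set.mem_insert_iff, Set.mem_singleton_iff, Subtype.ext_iff, Subtype.ext_iff]
    exact pointOfNormOne_eq_iff
  exact (congrArg Set.ncard hpair).trans (Set.ncard_pair hw)

theorem ncard_apply_eq_one [NeZero (2 : K)] [Finite V] :
    {v | Q v = 1}.ncard = 2 * (squarePoints Q).ncard := by
  have := Fintype.ofFinite (squarePoints Q)
  calc {v | Q v = 1}.ncard
      = Nat.card (Σ R, {v // pointOfNormOne Q v = R}) :=
        (Nat.card_congr (Equiv.sigmaFiberEquiv (pointOfNormOne Q))).symm
    _ = 2 * (squarePoints Q).ncard := by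
        simp only [Nat.card_sigma, card_pointOfNormOne_fiber, Finset.sum_const, Finset.card_univ,
          ← Nat.card_eq_fintype_card, Nat.card_coe_set_eq, smul_eq_mul, mul_comm]

end QuadraticForm

section Conic

variable {F : Type} [Field F]

variable (F) in
/-- The form `Qc` of the conic as an element of Mathlib's type of quadratic forms. -/
def conicForm : QuadraticForm F (Fin 3 → F) :=
  QuadraticMap.proj 1 1 - QuadraticMap.proj 0 2

theorem conicForm_apply (v : Fin 3 → F) : conicForm F v = v 1 ^ 2 - v 0 * v 2 := by
  simp [conicForm, sq]

theorem setOf_external_eq : {R | External F R} = squarePoints (conicForm F) := by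
  simp only [External, squarePoints, Qc, conicForm_apply]

theorem nAbs_eq_ncard (L : Submodule F (Fin 3 → F)) :
    nAbs F L = {S ∈ quadric (conicForm F) | S.submodule ≤ L}.ncard := by
  rw [← Nat.card_coe_set_eq]
  simp only [nAbs, Absolute, Qc, quadric, ← conicForm_apply]
  rfl

theorem nAbs_span_eq_zero_or_two_iff [NeZero (2 : F)] {p r : Fin 3 → F}
    (hpr : LinearIndependent F ![p, r]) (hp : conicForm F p ≠ 0) :
    (nAbs F (.span F {p, r}) = 0 ∨ nAbs F (.span F {p, r}) = 2) ↔
      discrim (conicForm F p) (polar (conicForm F) p r) (conicForm F r) ≠ 0 := by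
  rw [nAbs_eq_ncard, ncard_quadric_inter_span_pair hpr hp]
  exact ncard_quadratic_roots_eq_zero_or_two_iff hp

theorem isLine_and_mem_and_mem_iff {p r : Fin 3 → F} (hpr : LinearIndependent F ![p, r])
    {L : Submodule F (Fin 3 → F)} :
    IsLine F L ∧ p ∈ L ∧ r ∈ L ↔ L = .span F {p, r} := by
  have hspan : IsLine F (.span F {p, r}) := by
    rw [IsLine, ← Matrix.range_cons_cons_empty p r ![], finrank_span_eq_card hpr, Fintype.card_fin]
  constructor
  · rintro ⟨hL, hp, hr⟩
    have hle : .span F {p, r} ≤ L := Submodule.span_le.2 (Set.pair_subset hp hr)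
    exact (Submodule.eq_of_le_of_finrank_eq hle (hspan.trans hL.symm)).symm
  · rintro rfl
    exact ⟨hspan, Submodule.mem_span_of_mem (by simp), Submodule.mem_span_of_mem (by simp)⟩

theorem NE_eq_sdiff [NeZero (2 : F)] {P : ℙ F (Fin 3 → F)} (hP : External F P) :
    NE F P = squarePoints (conicForm F) \ tangentCone (conicForm F) P.rep := by
  ext R
  rw [Set.mem_sdiff, ← setOf_external_eq]
  refine and_congr_right fun _ ↦ ?_
  by_cases hRP : R = P
  · simp [hRP, mem_tangentCone_rep]
  have hPR := Projectivization.linearIndependent_pair_iff_ne.2 (Ne.symm hRP)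
  have hP0 : conicForm F P.rep ≠ 0 := by
    rw [conicForm_apply]
    exact hP.2
  have hline (L : Submodule F (Fin 3 → F)) :
      (IsLine F L ∧ P.submodule ≤ L ∧ R.submodule ≤ L ∧ (nAbs F L = 0 ∨ nAbs F L = 2)) ↔
        L = .span F {P.rep, R.rep} ∧ (nAbs F L = 0 ∨ nAbs F L = 2) := by
    rw [← isLine_and_mem_and_mem_iff hPR, P.submodule_eq, R.submodule_eq,
      Submodule.span_singleton_le_iff_mem, Submodule.span_singleton_le_iff_mem, and_assoc,
      and_assoc]
  simp only [hline, exists_eq_left, nAbs_span_eq_zero_or_two_iff hPR hP0, ne_eq, hRP,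
    not_false_eq_true, true_and]
  rfl

theorem setOf_external_notMem_NE_eq [NeZero (2 : F)] {P : ℙ F (Fin 3 → F)} (hP : External F P) :
    {R | External F R ∧ R ∉ NE F P} =
      tangentCone (conicForm F) P.rep \ quadric (conicForm F) := by
  have hP' : P ∈ squarePoints (conicForm F) := setOf_external_eq.subset hP
  change {R | External F R} \ NE F P = _
  rw [NE_eq_sdiff hP, setOf_external_eq, Set.sdiff_sdiff_right_self,
    squarePoints_inter_tangentCone hP'.1 hP'.2]

theorem ncard_isotropicPerp_conicForm_vec [Fintype F] [NeZero (2 : F)] {s : F} (hs : s ≠ 0) :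
    (isotropicPerp (conicForm F) ![0, s, 0]).ncard = 2 * Fintype.card F - 1 := by
  classical
  have hpolar (u : Fin 3 → F) : polar (conicForm F) ![0, s, 0] u = 2 * s * u 1 := by
    simp only [polar, conicForm_apply, Pi.add_apply, Matrix.cons_val]
    ring
  have himage : isotropicPerp (conicForm F) ![0, s, 0] =
      (fun z : F × F ↦ ![z.1, 0, z.2]) '' {z | z.1 * z.2 = 0} := by
    ext u
    constructor
    · rintro ⟨hpu, hu⟩
      have hu1 : u 1 = 0 := by simpa [hpolar, hs, two_ne_zero] using hpu
      refine ⟨(u 0, u 2), by simpa [conicForm_apply, hu1] using hu, ?_⟩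
      ext i
      fin_cases i <;> simp [hu1]
    · rintro ⟨z, hz : z.1 * z.2 = 0, rfl⟩
      exact ⟨by simp [hpolar], by simpa [conicForm_apply] using hz⟩
  have hinj : Function.Injective fun z : F × F ↦ ![z.1, 0, z.2] := fun z w h ↦
    Prod.ext (congrFun h 0) (congrFun h 2)
  have hcard : {z : F × F | z.1 * z.2 = 0}.ncard = (Fintype.card F - 1) + Fintype.card F :=
    (card_mul_eq 0).trans (by rw [if_pos rfl])
  have hpos : 0 < Fintype.card F := Fintype.card_pos
  rw [himage, Set.ncard_image_of_injective _ hinj, hcard]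
  omega

theorem ncard_isotropicPerp_conicForm [Fintype F] [NeZero (2 : F)] {p : Fin 3 → F}
    (hp : IsSquare (conicForm F p)) (hp0 : conicForm F p ≠ 0) :
    (isotropicPerp (conicForm F) p).ncard = 2 * Fintype.card F - 1 := by
  obtain ⟨s, hs⟩ := hp
  have hs0 : s ≠ 0 := fun h ↦ hp0 (by rw [hs, h, zero_mul])
  have hQ : conicForm F p = conicForm F ![0, s, 0] := by
    simp [hs, conicForm_apply, sq]
  rw [ncard_isotropicPerp_eq_of_apply_eq hQ (hQ ▸ hp0), ncard_isotropicPerp_conicForm_vec hs0]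

theorem ncard_conicForm_eq [Fintype F] (c : F) :
    {v | conicForm F v = c}.ncard = ∑ t : F, Nat.card {z : F × F // z.1 * z.2 = t ^ 2 - c} := by
  let e : {v | conicForm F v = c} ≃ Σ t : F, {z : F × F // z.1 * z.2 = t ^ 2 - c} :=
    { toFun v := ⟨v.1 1, (v.1 0, v.1 2), by
        have hv : conicForm F v.1 = c := v.2
        rw [conicForm_apply] at hv
        linear_combination -hv⟩
      invFun x := ⟨![x.2.1.1, x.1, x.2.1.2], by
        change conicForm F _ = c
        simp [conicForm_apply, x.2.2]⟩
      left_inv v := by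
        ext i
        fin_cases i <;> rfl
      right_inv x := rfl }
  rw [← Nat.card_coe_set_eq, Nat.card_congr e, Nat.card_sigma]

theorem ncard_conicForm_eq_one [Fintype F] [NeZero (2 : F)] :
    {v | conicForm F v = 1}.ncard = Fintype.card F * (Fintype.card F + 1) := by
  classical
  have hroots : ({t | t ^ 2 - 1 = 0} : Finset F) = {1, -1} := by
    ext t
    simp [sub_eq_zero]
  have hne : (1 : F) ≠ -1 := by
    rw [ne_eq, eq_neg_iff_add_eq_zero, one_add_one_eq_two]
    exact two_ne_zero
  obtain ⟨n, hn⟩ : ∃ n, Fintype.card F = n + 1 :=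
    Nat.exists_eq_succ_of_ne_zero Fintype.card_ne_zero
  calc {v | conicForm F v = 1}.ncard
      = ∑ t : F, ((Fintype.card F - 1) + if t ^ 2 - 1 = 0 then Fintype.card F else 0) := by
        simp only [ncard_conicForm_eq, card_mul_eq]
    _ = Fintype.card F * (Fintype.card F - 1) + 2 * Fintype.card F := by
        rw [Finset.sum_add_distrib, ← Finset.sum_filter, hroots, Finset.sum_const,
          Finset.sum_const, Finset.card_univ, Finset.card_pair hne, smul_eq_mul, smul_eq_mul]
    _ = Fintype.card F * (Fintype.card F + 1) := by
        rw [hn, Nat.add_sub_cancel]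
        ring

theorem two_mul_ncard_external [Fintype F] [NeZero (2 : F)] :
    2 * {R | External F R}.ncard = Fintype.card F * (Fintype.card F + 1) := by
  rw [setOf_external_eq, ← ncard_apply_eq_one, ncard_conicForm_eq_one]

theorem ncard_external_notMem_NE [Fintype F] [NeZero (2 : F)] {P : ℙ F (Fin 3 → F)}
    (hP : External F P) :
    {R | External F R ∧ R ∉ NE F P}.ncard = 2 * Fintype.card F - 1 := by
  have hP' : P ∈ squarePoints (conicForm F) := setOf_external_eq.subset hP
  rw [setOf_external_notMem_NE_eq hP, ncard_tangentCone_sdiff_quadric hP'.2,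
    ncard_isotropicPerp_conicForm hP'.1 hP'.2]

end Conic

/-- For an external point `P` of `PG(2,q)`, the complement of `NE(P)` within the set
of external points has cardinality `2(q-1)+1 = 2q-1`; hence
`|NE(P)| ≡ q(q+1)/2 - 1 (mod 2)`. -/
theorem stmt14 (F : Type) [Field F] [Fintype F] (q : ℕ)
    (hq : Fintype.card F = q) (hodd : Odd q)
    (P : Projectivization F (Fin 3 → F)) (hP : External F P) :
    {R : Projectivization F (Fin 3 → F) | External F R ∧ R ∉ NE F P}.ncard = 2 * q - 1 ∧
    (NE F P).ncard % 2 = (q * (q + 1) / 2 - 1) % 2 := by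
  subst hq
  have : NeZero (2 : F) := ⟨Ring.two_ne_zero fun hchar ↦ by
    have := FiniteField.even_card_of_char_two hchar
    rw [Nat.odd_iff] at hodd
    omega⟩
  have hcompl := ncard_external_notMem_NE hP
  refine ⟨hcompl, ?_⟩
  have hE := two_mul_ncard_external (F := F)
  have hsum : {R | External F R ∧ R ∉ NE F P}.ncard + (NE F P).ncard =
      {R | External F R}.ncard :=
    Set.ncard_sdiff_add_ncard_of_subset fun R hR ↦ hR.1
  have hpos := hodd.pos
  rw [← hE, Nat.mul_div_cancel_left _ two_pos]
  omega
end
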